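/- Let W be a discrete memoryless channel with R_cr < C, and suppose Q ∈ P(𝒳) and R > 0 are such that the pair (Q,W) is nonsingular and R_cr(Q) < R < I(Q;W). Let ρ*_R(Q) := −∂E_r(a,Q)/∂a evaluated at a = R. Then there exists a constant K̃₂ > 0, depending only on W, R and Q, such that for every positive integer N there exists an (N,R) code (f,φ) whose maximal error probability satisfies P_e(f,φ) ≤ K̃₂ · N^{−(1+ρ*_R(Q))/2} · e^{−N·E_r(R,Q)}. -/

import Mathlib

open Real BigOperators
open scoped Classical

namespace RCB

/-- A probability distribution on a finite alphabet. -/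
def IsDist {α : Type*} [Fintype α] (Q : α → ℝ) : Prop :=
  (∀ a, 0 ≤ Q a) ∧ ∑ a, Q a = 1

/-- A discrete memoryless channel, i.e. a stochastic matrix from `X` to `Y`. -/
def IsChannel {X Y : Type*} [Fintype X] [Fintype Y] (W : X → Y → ℝ) : Prop :=
  (∀ x y, 0 ≤ W x y) ∧ ∀ x, ∑ y, W x y = 1

/-- The Gallager function `E_o(ρ, Q)`. -/
noncomputable def Eo {X Y : Type*} [Fintype X] [Fintype Y]
    (W : X → Y → ℝ) (ρ : ℝ) (Q : X → ℝ) : ℝ :=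
  - Real.log (∑ y, (∑ x, Q x * W x y ^ (1 / (1 + ρ))) ^ (1 + ρ))

/-- The random coding exponent `E_r(R, Q)` for input distribution `Q`. -/
noncomputable def ErQ {X Y : Type*} [Fintype X] [Fintype Y]
    (W : X → Y → ℝ) (R : ℝ) (Q : X → ℝ) : ℝ :=
  sSup ((fun ρ => -ρ * R + Eo W ρ Q) '' Set.Icc (0 : ℝ) 1)

/-- The random coding exponent `E_r(R)`. -/
noncomputable def Er {X Y : Type*} [Fintype X] [Fintype Y]
    (W : X → Y → ℝ) (R : ℝ) : ℝ :=
  sSup {v : ℝ | ∃ Q : X → ℝ, IsDist Q ∧ v = ErQ W R Q}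

/-- The mutual information `I(Q; W)` (natural logarithm). -/
noncomputable def MI {X Y : Type*} [Fintype X] [Fintype Y]
    (W : X → Y → ℝ) (Q : X → ℝ) : ℝ :=
  ∑ x, ∑ y, Q x * W x y * Real.log (W x y / ∑ x', Q x' * W x' y)

/-- The capacity `C = max_Q I(Q;W)`. -/
noncomputable def Capacity {X Y : Type*} [Fintype X] [Fintype Y]
    (W : X → Y → ℝ) : ℝ :=
  sSup {v : ℝ | ∃ Q : X → ℝ, IsDist Q ∧ v = MI W Q}

/-- The critical rate of the input distribution `Q`:
`R_cr(Q) = ∂E_o(ρ,Q)/∂ρ |_{ρ=1}`. -/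
noncomputable def RcrQ {X Y : Type*} [Fintype X] [Fintype Y]
    (W : X → Y → ℝ) (Q : X → ℝ) : ℝ :=
  deriv (fun ρ => Eo W ρ Q) 1

/-- The critical rate of the channel: the largest `R` with
`E_r(R) = -R + max_Q E_o(1,Q)`. -/
noncomputable def Rcr {X Y : Type*} [Fintype X] [Fintype Y]
    (W : X → Y → ℝ) : ℝ :=
  sSup {R : ℝ | Er W R = -R + sSup {v : ℝ | ∃ Q : X → ℝ, IsDist Q ∧ v = Eo W 1 Q}}

/-- The rate `R_∞ = inf {R ≥ 0 : E_SP(R) < ∞}` (finiteness of the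
sphere-packing exponent expressed as boundedness of the family of affine maps). -/
noncomputable def Rinf {X Y : Type*} [Fintype X] [Fintype Y]
    (W : X → Y → ℝ) : ℝ :=
  sInf {R : ℝ | 0 ≤ R ∧
    BddAbove {v : ℝ | ∃ (Q : X → ℝ) (ρ : ℝ), IsDist Q ∧ 0 ≤ ρ ∧ v = -ρ * R + Eo W ρ Q}}

/-- The pair `(Q, W)` is singular if `W(y|x) = W(y|z)` whenever
`Q(x)W(y|x)Q(z)W(y|z) > 0`. -/
def Singular {X Y : Type*} (W : X → Y → ℝ) (Q : X → ℝ) : Prop :=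
  ∀ x y z, 0 < Q x * W x y * (Q z * W z y) → W x y = W z y

/-- `ρ^*_R(Q) = -∂E_r(a,Q)/∂a |_{a=R}`. -/
noncomputable def rhoStarQ {X Y : Type*} [Fintype X] [Fintype Y]
    (W : X → Y → ℝ) (Q : X → ℝ) (R : ℝ) : ℝ :=
  - deriv (fun a => ErQ W a Q) R

/-- The number of messages of an `(N, R)` code: `⌈exp (N R)⌉`. -/
noncomputable def nMsgs (N : ℕ) (R : ℝ) : ℕ := ⌈Real.exp (N * R)⌉₊

/-- The `N`-fold memoryless extension of the channel `W`. -/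
noncomputable def Wn {X Y : Type*} (W : X → Y → ℝ) {N : ℕ}
    (c : Fin N → X) (y : Fin N → Y) : ℝ :=
  ∏ n, W (c n) (y n)

/-- The maximal error probability of the code `(f, φ)` over the `N`-fold
memoryless extension of `W`. -/
noncomputable def Pmax {X Y : Type*} [Fintype X] [Fintype Y] {M N : ℕ}
    (W : X → Y → ℝ) (f : Fin M → Fin N → X) (φ : (Fin N → Y) → Fin M) : ℝ :=
  ⨆ m : Fin M, ∑ y : Fin N → Y, Wn W (f m) y * (if φ y ≠ m then (1 : ℝ) else 0)

/-- The ensemble average error probability `P̄_e(Q, N, R)`: the `⌈exp (N R)⌉`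
codewords are drawn i.i.d. from `Q^N` and decoded by maximum-likelihood
decoding, ties counted as errors. -/
noncomputable def Pbar {X Y : Type*} [Fintype X] [Fintype Y]
    (W : X → Y → ℝ) (Q : X → ℝ) (N : ℕ) (R : ℝ) : ℝ :=
  ∑ c : Fin (nMsgs N R) → Fin N → X,
    (∏ m, ∏ n, Q (c m n)) *
      ((nMsgs N R : ℝ)⁻¹ *
        ∑ m, ∑ y : Fin N → Y,
          Wn W (c m) y *
            (if ∃ m', m' ≠ m ∧ Wn W (c m) y ≤ Wn W (c m') y then (1 : ℝ) else 0))

/-- The tilted output distribution `f_ρ`. -/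
noncomputable def fRho {X Y : Type*} [Fintype X] [Fintype Y]
    (W : X → Y → ℝ) (Q : X → ℝ) (ρ : ℝ) (y : Y) : ℝ :=
  (∑ x, Q x * W x y ^ (1 / (1 + ρ))) ^ (1 + ρ) /
    ∑ b, (∑ a, Q a * W a b ^ (1 / (1 + ρ))) ^ (1 + ρ)

/-- The cumulant generating function
`Λ_ρ(λ) = log E_{P_{X,Y}}[exp(λ log (f_ρ(Y)/W(Y|X)))]` with `P_{X,Y} = Q × W`. -/
noncomputable def Lam {X Y : Type*} [Fintype X] [Fintype Y]
    (W : X → Y → ℝ) (Q : X → ℝ) (ρ : ℝ) (t : ℝ) : ℝ :=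
  Real.log (∑ x, ∑ y, Q x * W x y * Real.exp (t * Real.log (fRho W Q ρ y / W x y)))

/-- `P_{X,Y,Z}(S̃_Q)` where `P_{X,Y,Z}(x,y,z) = Q(x)W(y|x)Q(z)` and
`S̃_Q = {(x,y,z) : Q(x)W(y|x)Q(z)W(y|z) > 0}`. -/
noncomputable def PStilde {X Y : Type*} [Fintype X] [Fintype Y]
    (W : X → Y → ℝ) (Q : X → ℝ) : ℝ :=
  ∑ x, ∑ y, ∑ z,
    if 0 < Q x * W x y * (Q z * W z y) then Q x * W x y * Q z else 0

/-- The bivariate cumulant generating function `Λ_{1,ρ}(v)` with respect to the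
conditional distribution `P̃_{X,Y,Z}` of `P_{X,Y,Z}` given `S̃_Q`. -/
noncomputable def Lam1 {X Y : Type*} [Fintype X] [Fintype Y]
    (W : X → Y → ℝ) (Q : X → ℝ) (ρ : ℝ) (v : ℝ × ℝ) : ℝ :=
  Real.log ((∑ x, ∑ y, ∑ z,
    if 0 < Q x * W x y * (Q z * W z y) then
      Q x * W x y * Q z *
        Real.exp (v.1 * Real.log (W x y / fRho W Q ρ y) +
          v.2 * Real.log (W z y / W x y))
    else 0) / PStilde W Q)

/-- The subdifferential of `f : ℝ → ℝ` at `R` (for convex `f`). -/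
def Subderiv (f : ℝ → ℝ) (R : ℝ) : Set ℝ :=
  {g : ℝ | ∀ x, f R + g * (x - R) ≤ f x}

/-- The tilted backward channel `P^ρ_{X|Y}`. -/
noncomputable def PXgY {X Y : Type*} [Fintype X]
    (W : X → Y → ℝ) (Q : X → ℝ) (ρ : ℝ) (x : X) (y : Y) : ℝ :=
  Q x * W x y ^ (1 / (1 + ρ)) / ∑ a, Q a * W a y ^ (1 / (1 + ρ))

/-- The tilted joint distribution `P^ρ_{X,Y}(x,y) = P^ρ_{X|Y}(x|y) P^ρ_Y(y)`. -/
noncomputable def PXY {X Y : Type*} [Fintype X] [Fintype Y]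
    (W : X → Y → ℝ) (Q : X → ℝ) (ρ : ℝ) (x : X) (y : Y) : ℝ :=
  PXgY W Q ρ x y * fRho W Q ρ y

lemma mix_rpow_neg_le {q u θ : ℝ} (hq0 : 0 ≤ q) (hq1 : q ≤ 1) (hu : 1 ≤ u)
    (hθ0 : 0 ≤ θ) (hθ1 : θ ≤ 1) :
    q * (u + 1) ^ (-θ) + (1 - q) * u ^ (-θ) ≤ (u + q / 2) ^ (-θ) := by
  have hu0 : 0 < u := by linarith
  have key := (Real.concaveOn_rpow hθ0 hθ1).2 (x := (u + 1)⁻¹) (y := u⁻¹)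
    (Set.mem_Ici.2 (by positivity)) (Set.mem_Ici.2 (by positivity)) hq0
    (sub_nonneg.2 hq1) (by ring)
  simp only [smul_eq_mul] at key
  rw [Real.rpow_neg (by positivity), Real.rpow_neg hu0.le, Real.rpow_neg (by positivity),
    ← Real.inv_rpow (by positivity), ← Real.inv_rpow hu0.le, ← Real.inv_rpow (by positivity)]
  refine key.trans (Real.rpow_le_rpow ?_ ?_ hθ0)
  · have : 0 ≤ 1 - q := sub_nonneg.2 hq1
    positivity
  · have h : q * (u + 1)⁻¹ + (1 - q) * u⁻¹ = (u + 1 - q) / (u * (u + 1)) := by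
      field_simp
      ring
    rw [h, inv_eq_one_div, div_le_div_iff₀ (by positivity) (by positivity)]
    nlinarith [mul_nonneg hq0 (sub_nonneg.2 hu), mul_nonneg hq0 hq0]

lemma sum_fin_succ_fun {α : Type*} [Fintype α] {n : ℕ} (Φ : (Fin (n + 1) → α) → ℝ) :
    ∑ c, Φ c = ∑ x, ∑ c : Fin n → α, Φ (Fin.cons x c) := by
  rw [← (Fin.consEquiv (fun _ => α)).sum_comp, Fintype.sum_prod_type]
  rfl

/-- The number of coordinates of `y` equal to `y₀`, as a real number. -/
noncomputable def count {Y : Type*} (y₀ : Y) {N : ℕ} (y : Fin N → Y) : ℝ :=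
  ∑ n, if y n = y₀ then 1 else 0

lemma count_nonneg {Y : Type*} (y₀ : Y) {N : ℕ} (y : Fin N → Y) : 0 ≤ count y₀ y :=
  Finset.sum_nonneg fun n _ => by split_ifs <;> norm_num

lemma count_cons {Y : Type*} (y₀ b : Y) {N : ℕ} (y : Fin N → Y) :
    count y₀ (Fin.cons b y : Fin (N + 1) → Y) = (if b = y₀ then 1 else 0) + count y₀ y := by
  simp only [count, Fin.sum_univ_succ, Fin.cons_zero, Fin.cons_succ]

/-- A product-weight sum of functions in a chain `H k` of iterated two-point averages decays
like the inverse square root of the number of nondegenerate coordinates. -/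
lemma anticoncentration {X Y : Type*} [Fintype X] (p v : Y → X → ℝ)
    (hp : ∀ y x, 0 ≤ p y x) {y₀ : Y} {x₁ x₂ : X} (hx : x₁ ≠ x₂) {d q B : ℝ}
    (hd : v y₀ x₂ = v y₀ x₁ + d) (hq0 : 0 ≤ q) (hq1 : q ≤ 1)
    (h1 : q / 2 * ∑ x, p y₀ x ≤ p y₀ x₁) (h2 : q / 2 * ∑ x, p y₀ x ≤ p y₀ x₂)
    (H : ℕ → ℝ → ℝ) (Hsucc : ∀ k a, H (k + 1) a = (H k a + H k (a + d)) / 2)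
    (hB0 : 0 ≤ B) (hB : ∀ (k : ℕ) a, H k a ≤ B * ((k : ℝ) + 1) ^ (-(1 / 2) : ℝ)) :
    ∀ (N : ℕ) (y : Fin N → Y) (k : ℕ) (a : ℝ),
      ∑ c : Fin N → X, (∏ n, p (y n) (c n)) * H k (a + ∑ n, v (y n) (c n)) ≤
        (∏ n, ∑ x, p (y n) x) *
          (B * ((k : ℝ) + 1 + q / 2 * count y₀ y) ^ (-(1 / 2) : ℝ)) := by
  intro N
  induction N with
  | zero =>
    intro y k a
    simpa [count] using hB k a
  | succ N ih =>
    intro y k a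
    obtain ⟨b, y, rfl⟩ : ∃ b y', y = Fin.cons b y' := ⟨y 0, Fin.tail y, (Fin.cons_self_tail y).symm⟩
    set J : ℕ → ℝ → ℝ := fun k t =>
      ∑ c : Fin N → X, (∏ n, p (y n) (c n)) * H k (t + ∑ n, v (y n) (c n)) with hJ
    have hL : ∑ c : Fin (N + 1) → X, (∏ n, p ((Fin.cons b y : Fin (N + 1) → Y) n) (c n)) *
        H k (a + ∑ n, v ((Fin.cons b y : Fin (N + 1) → Y) n) (c n)) =
        ∑ x, p b x * J k (a + v b x) := by
      rw [sum_fin_succ_fun]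
      refine Finset.sum_congr rfl fun x _ => ?_
      simp only [hJ, Finset.mul_sum, Fin.prod_univ_succ, Fin.sum_univ_succ, Fin.cons_zero,
        Fin.cons_succ, mul_assoc, add_assoc]
    rw [hL, Fin.prod_univ_succ, count_cons]
    simp only [Fin.cons_zero, Fin.cons_succ]
    set G := ∏ n, ∑ x, p (y n) x with hG
    have hG0 : 0 ≤ G := Finset.prod_nonneg fun n _ => Finset.sum_nonneg fun x _ => hp _ _
    have hc := count_nonneg y₀ y
    by_cases hb : b = y₀
    · subst hb
      set g := ∑ x, p b x with hg
      have hg0 : 0 ≤ g := Finset.sum_nonneg fun x _ => hp _ _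
      set u : ℝ := (k : ℝ) + 1 + q / 2 * count b y with hu
      have hu1 : 1 ≤ u := by
        have : 0 ≤ q / 2 * count b y := by positivity
        have : (0 : ℝ) ≤ k := by positivity
        linarith
      have hJs : ∀ t, J (k + 1) t = (J k t + J k (t + d)) / 2 := by
        intro t
        simp only [hJ, Hsucc]
        rw [← Finset.sum_add_distrib, Finset.sum_div]
        refine Finset.sum_congr rfl fun c _ => ?_
        rw [add_right_comm t d]
        ring
      set r : X → ℝ := fun x =>
        p b x - q / 2 * g * ((if x = x₁ then 1 else 0) + if x = x₂ then 1 else 0) with hr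
      have hr0 : ∀ x, 0 ≤ r x := by
        intro x
        simp only [hr]
        by_cases e1 : x = x₁
        · subst e1
          simp only [if_true, if_neg hx]
          linarith
        · by_cases e2 : x = x₂
          · subst e2
            simp only [if_true, if_neg e1]
            linarith
          · simp only [if_neg e1, if_neg e2]
            linarith [hp b x]
      have hrsum : ∑ x, r x = (1 - q) * g := by
        simp only [hr, Finset.sum_sub_distrib, ← Finset.mul_sum, Finset.sum_add_distrib,
          Finset.sum_ite_eq', Finset.mem_univ, if_true]
        ring
      have hsplit : ∑ x, p b x * J k (a + v b x) =
          ∑ x, r x * J k (a + v b x) + q * g * J (k + 1) (a + v b x₁) := by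
        have : ∀ x, p b x * J k (a + v b x) = r x * J k (a + v b x) +
            q / 2 * g * ((if x = x₁ then J k (a + v b x) else 0) +
              if x = x₂ then J k (a + v b x) else 0) := by
          intro x
          simp only [hr]
          split_ifs <;> ring
        simp only [this, Finset.sum_add_distrib, ← Finset.mul_sum, Finset.sum_ite_eq',
          Finset.mem_univ, if_true]
        rw [hJs, hd, ← add_assoc a]
        ring
      have e1 : ∑ x, r x * J k (a + v b x) ≤ (1 - q) * g * (G * (B * u ^ (-(1 / 2) : ℝ))) := by
        rw [← hrsum, Finset.sum_mul]
        exact Finset.sum_le_sum fun x _ => mul_le_mul_of_nonneg_left (ih y k _) (hr0 x)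
      have e2 : J (k + 1) (a + v b x₁) ≤ G * (B * (u + 1) ^ (-(1 / 2) : ℝ)) := by
        have := ih y (k + 1) (a + v b x₁)
        rwa [show ((k + 1 : ℕ) : ℝ) + 1 + q / 2 * count b y = u + 1 by
          rw [hu]; push_cast; ring] at this
      have e3 := mix_rpow_neg_le hq0 hq1 hu1 (θ := 1 / 2) (by norm_num) (by norm_num)
      rw [hsplit]
      simp only [if_true]
      rw [show (k : ℝ) + 1 + q / 2 * (1 + count b y) = u + q / 2 by rw [hu]; ring]
      calc _ ≤ (1 - q) * g * (G * (B * u ^ (-(1 / 2) : ℝ))) +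
            q * g * (G * (B * (u + 1) ^ (-(1 / 2) : ℝ))) :=
            add_le_add e1 (mul_le_mul_of_nonneg_left e2 (by positivity))
        _ = g * G * B * (q * (u + 1) ^ (-(1 / 2) : ℝ) + (1 - q) * u ^ (-(1 / 2) : ℝ)) := by ring
        _ ≤ g * G * B * (u + q / 2) ^ (-(1 / 2) : ℝ) :=
            mul_le_mul_of_nonneg_left e3 (by positivity)
        _ = _ := by ring
    · rw [if_neg hb, zero_add, mul_assoc, Finset.sum_mul]
      exact Finset.sum_le_sum fun x _ => mul_le_mul_of_nonneg_left (ih y k _) (hp b x)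

/-- The inverse `θ`-moment of the number of occurrences of a symbol of positive probability
in an i.i.d. sequence of length `N` is of order `N ^ (-θ)`. -/
lemma sum_prod_mul_count_rpow_le {Y : Type*} [Fintype Y] (f : Y → ℝ) (hf : ∀ y, 0 ≤ f y)
    {y₀ : Y} {θ q : ℝ} (hθ0 : 0 ≤ θ) (hθ1 : θ ≤ 1) (hq0 : 0 ≤ q) (hq1 : q ≤ 1)
    (hq : f y₀ = q * ∑ y, f y) :
    ∀ (N : ℕ) (u : ℝ), 1 ≤ u →
      ∑ y : Fin N → Y, (∏ n, f (y n)) * (u + count y₀ y) ^ (-θ) ≤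
        (∑ y, f y) ^ N * (u + q / 2 * N) ^ (-θ) := by
  intro N
  induction N with
  | zero =>
    intro u _
    simp [count]
  | succ N ih =>
    intro u hu
    set F := ∑ y, f y with hF
    have hF0 : 0 ≤ F := Finset.sum_nonneg fun y _ => hf y
    set J : ℝ → ℝ := fun u =>
      ∑ y : Fin N → Y, (∏ n, f (y n)) * (u + count y₀ y) ^ (-θ) with hJ
    have hL : ∑ y : Fin (N + 1) → Y, (∏ n, f (y n)) * (u + count y₀ y) ^ (-θ) =
        q * F * J (u + 1) + (1 - q) * F * J u := by
      rw [sum_fin_succ_fun]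
      have : ∀ b, ∑ c : Fin N → Y, (∏ n, f ((Fin.cons b c : Fin (N + 1) → Y) n)) *
          (u + count y₀ (Fin.cons b c : Fin (N + 1) → Y)) ^ (-θ) =
          f b * J u + if b = y₀ then f b * (J (u + 1) - J u) else 0 := by
        intro b
        have : ∑ c : Fin N → Y, (∏ n, f ((Fin.cons b c : Fin (N + 1) → Y) n)) *
          (u + count y₀ (Fin.cons b c : Fin (N + 1) → Y)) ^ (-θ) =
          f b * J (u + if b = y₀ then 1 else 0) := by
          simp only [hJ, Finset.mul_sum, Fin.prod_univ_succ, Fin.cons_zero, Fin.cons_succ,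
            count_cons, mul_assoc, add_assoc]
        rw [this]
        split_ifs
        · ring
        · simp
      simp only [this, Finset.sum_add_distrib, ← Finset.sum_mul, Finset.sum_ite_eq',
        Finset.mem_univ, if_true, hq, ← hF]
      ring
    have hqN : 0 ≤ q / 2 * (N : ℝ) := by positivity
    have e := mix_rpow_neg_le hq0 hq1 (u := u + q / 2 * N) (by linarith) hθ0 hθ1
    have i1 := ih (u + 1) (by linarith)
    have i0 := ih u hu
    rw [hL]
    calc _ ≤ q * F * (F ^ N * (u + 1 + q / 2 * N) ^ (-θ)) +
          (1 - q) * F * (F ^ N * (u + q / 2 * N) ^ (-θ)) :=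
          add_le_add (mul_le_mul_of_nonneg_left i1 (by positivity))
            (mul_le_mul_of_nonneg_left i0 (mul_nonneg (sub_nonneg.2 hq1) hF0))
      _ = F ^ (N + 1) * (q * (u + q / 2 * N + 1) ^ (-θ) +
          (1 - q) * (u + q / 2 * N) ^ (-θ)) := by
          rw [show u + 1 + q / 2 * (N : ℝ) = u + q / 2 * N + 1 by ring]
          ring
      _ ≤ F ^ (N + 1) * (u + q / 2 * N + q / 2) ^ (-θ) :=
          mul_le_mul_of_nonneg_left e (by positivity)
      _ = _ := by
          rw [show u + q / 2 * (N : ℝ) + q / 2 = u + q / 2 * ((N + 1 : ℕ) : ℝ) by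
            push_cast; ring]

lemma centralBinom_sq_le (n : ℕ) : (2 * n + 1) * n.centralBinom ^ 2 ≤ 16 ^ n := by
  induction n with
  | zero => simp
  | succ n ih =>
    have h := Nat.succ_mul_centralBinom_succ n
    have h' : (n + 1) ^ 2 * (n + 1).centralBinom ^ 2 = 4 * (2 * n + 1) ^ 2 * n.centralBinom ^ 2 := by
      rw [← mul_pow, h]
      ring
    refine le_of_mul_le_mul_left (a := (n + 1) ^ 2) ?_ (by positivity)
    calc (n + 1) ^ 2 * ((2 * (n + 1) + 1) * (n + 1).centralBinom ^ 2)
        = (4 * (2 * n + 3) * (2 * n + 1)) * ((2 * n + 1) * n.centralBinom ^ 2) := by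
          linear_combination (2 * n + 3) * h'
      _ ≤ (16 * (n + 1) ^ 2) * 16 ^ n := by
          refine Nat.mul_le_mul ?_ ih
          nlinarith
      _ = _ := by ring

lemma centralBinom_div_le (n : ℕ) :
    (n.centralBinom : ℝ) / 4 ^ n ≤ ((2 * n : ℝ) + 1) ^ (-(1 / 2) : ℝ) := by
  have h : ((2 * n + 1 : ℝ)) * (n.centralBinom : ℝ) ^ 2 ≤ 16 ^ n := by
    exact_mod_cast centralBinom_sq_le n
  rw [Real.rpow_neg (by positivity), ← Real.sqrt_eq_rpow, ← Real.sqrt_inv]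
  refine Real.le_sqrt_of_sq_le ?_
  rw [div_pow, ← pow_mul, mul_comm n 2, pow_mul, inv_eq_one_div,
    div_le_div_iff₀ (by positivity) (by positivity)]
  norm_num
  linarith

lemma choose_div_two_pow_le (k j : ℕ) :
    (k.choose j : ℝ) / 2 ^ k ≤ ((k : ℝ) + 1) ^ (-(1 / 2) : ℝ) := by
  have hmid : (k.choose j : ℝ) ≤ k.choose (k / 2) := by exact_mod_cast Nat.choose_le_middle j k
  refine (div_le_div_of_nonneg_right hmid (by positivity)).trans ?_
  rcases Nat.even_or_odd' k with ⟨m, rfl | rfl⟩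
  · have := centralBinom_div_le m
    rw [Nat.mul_div_cancel_left _ (by norm_num), pow_mul, ← Nat.centralBinom_eq_two_mul_choose]
    push_cast
    norm_num at this ⊢
    exact this
  · have h := centralBinom_div_le (m + 1)
    have hc : ((m + 1).centralBinom : ℝ) = 2 * (2 * m + 1).choose m := by
      have h1 : (m + 1).centralBinom = (2 * m + 1).choose m + (2 * m + 1).choose (m + 1) := by
        rw [Nat.centralBinom_eq_two_mul_choose, show 2 * (m + 1) = 2 * m + 1 + 1 by ring,
          Nat.choose_succ_succ]
      have h2 : (2 * m + 1).choose (m + 1) = (2 * m + 1).choose m := Nat.choose_symm_half m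
      rw [h1, h2]
      push_cast
      ring
    rw [show (2 * m + 1) / 2 = m by omega]
    have e : ((2 * m + 1).choose m : ℝ) / 2 ^ (2 * m + 1) =
        ((m + 1).centralBinom : ℝ) / 4 ^ (m + 1) := by
      rw [hc, show (4 : ℝ) = 2 ^ 2 by norm_num, ← pow_mul]
      field_simp
      ring
    rw [e]
    refine h.trans (Real.rpow_le_rpow_of_nonpos (by positivity) ?_ (by norm_num))
    push_cast
    linarith

/-- The `k`-fold iterate of the two-point average `F ↦ (F + F (· + d)) / 2`. -/
noncomputable def binomialAverage (d : ℝ) (F : ℝ → ℝ) (k : ℕ) (a : ℝ) : ℝ :=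
  ∑ j ∈ Finset.range (k + 1), (k.choose j : ℝ) * (F (a + j * d) / 2 ^ k)

lemma binomialAverage_zero (d : ℝ) (F : ℝ → ℝ) (a : ℝ) : binomialAverage d F 0 a = F a := by
  simp [binomialAverage]

lemma binomialAverage_succ (d : ℝ) (F : ℝ → ℝ) (k : ℕ) (a : ℝ) :
    binomialAverage d F (k + 1) a =
      (binomialAverage d F k a + binomialAverage d F k (a + d)) / 2 := by
  have h := Finset.sum_choose_succ_mul (R := ℝ) (fun i _ => F (a + i * d) / 2 ^ (k + 1)) k
  rw [binomialAverage, h, binomialAverage, binomialAverage, ← Finset.sum_add_distrib,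
    ← Finset.sum_add_distrib, Finset.sum_div]
  refine Finset.sum_congr rfl fun j _ => ?_
  rw [show a + ((j + 1 : ℕ) : ℝ) * d = a + d + j * d by push_cast; ring, pow_succ]
  ring

lemma binomialAverage_le {d B : ℝ} {F : ℝ → ℝ} (hF : ∀ t, 0 ≤ F t)
    (hB : ∀ (m : ℕ) a, ∑ j ∈ Finset.range m, F (a + j * d) ≤ B) (k : ℕ) (a : ℝ) :
    binomialAverage d F k a ≤ B * ((k : ℝ) + 1) ^ (-(1 / 2) : ℝ) := by
  calc binomialAverage d F k a
      ≤ ∑ j ∈ Finset.range (k + 1), F (a + j * d) * ((k : ℝ) + 1) ^ (-(1 / 2) : ℝ) := by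
        refine Finset.sum_le_sum fun j _ => ?_
        rw [mul_div_left_comm]
        exact mul_le_mul_of_nonneg_left (choose_div_two_pow_le k j) (hF _)
    _ ≤ _ := by
        rw [← Finset.sum_mul]
        exact mul_le_mul_of_nonneg_right (hB _ _) (by positivity)

lemma exp_neg_abs_le_logistic_sub {κ d : ℝ} (hκ : 0 < κ) (hd : 0 < d) (t : ℝ) :
    Real.exp (-κ * |t|) ≤ 4 / (1 - Real.exp (-κ * d)) *
      ((1 + Real.exp (-κ * (t + d)))⁻¹ - (1 + Real.exp (-κ * t))⁻¹) := by
  have hD1 : Real.exp (-κ * d) < 1 := Real.exp_lt_one_iff.2 (by nlinarith)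
  have hD0 := Real.exp_pos (-κ * d)
  rw [mul_add, Real.exp_add]
  set D := Real.exp (-κ * d)
  have hE0 := Real.exp_pos (-κ * t)
  have hE : Real.exp (-κ * |t|) * (1 + Real.exp (-κ * t)) ^ 2 ≤ 4 * Real.exp (-κ * t) := by
    rcases le_total 0 t with ht | ht
    · rw [abs_of_nonneg ht]
      have : Real.exp (-κ * t) ≤ 1 := Real.exp_le_one_iff.2 (by nlinarith)
      rw [mul_comm 4]
      refine mul_le_mul_of_nonneg_left ?_ hE0.le
      nlinarith
    · rw [abs_of_nonpos ht, show -κ * -t = -(-κ * t) by ring, Real.exp_neg]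
      have : 1 ≤ Real.exp (-κ * t) := Real.one_le_exp (by nlinarith)
      rw [inv_mul_le_iff₀ hE0]
      nlinarith
  set E := Real.exp (-κ * t)
  have h1D : 0 < 1 - D := by linarith
  have heq : 4 / (1 - D) * ((1 + E * D)⁻¹ - (1 + E)⁻¹) = 4 * E / ((1 + E * D) * (1 + E)) := by
    field_simp
    ring
  rw [heq, le_div_iff₀ (by positivity)]
  refine le_trans (mul_le_mul_of_nonneg_left ?_ (Real.exp_pos _).le) hE
  nlinarith [mul_pos hE0 h1D, mul_pos hE0 hE0]

lemma sum_exp_neg_abs_le {κ d : ℝ} (hκ : 0 < κ) (hd : 0 < d) (m : ℕ) (a : ℝ) :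
    ∑ j ∈ Finset.range m, Real.exp (-κ * |a + j * d|) ≤ 4 / (1 - Real.exp (-κ * d)) := by
  have hD1 : Real.exp (-κ * d) < 1 := Real.exp_lt_one_iff.2 (by nlinarith)
  have hC : 0 ≤ 4 / (1 - Real.exp (-κ * d)) := div_nonneg (by norm_num) (by linarith)
  have htel := Finset.sum_range_sub (fun j : ℕ => (1 + Real.exp (-κ * (a + j * d)))⁻¹) m
  calc _ ≤ ∑ j ∈ Finset.range m, 4 / (1 - Real.exp (-κ * d)) *
        ((1 + Real.exp (-κ * (a + ((j + 1 : ℕ) : ℝ) * d)))⁻¹ -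
          (1 + Real.exp (-κ * (a + j * d)))⁻¹) := by
        refine Finset.sum_le_sum fun j _ => ?_
        have := exp_neg_abs_le_logistic_sub hκ hd (a + j * d)
        rwa [show a + ((j + 1 : ℕ) : ℝ) * d = a + j * d + d by push_cast; ring]
    _ ≤ 4 / (1 - Real.exp (-κ * d)) * 1 := by
        rw [← Finset.mul_sum, htel]
        refine mul_le_mul_of_nonneg_left ?_ hC
        have h1 : (1 + Real.exp (-κ * (a + m * d)))⁻¹ ≤ 1 :=
          inv_le_one_of_one_le₀ (by linarith [Real.exp_pos (-κ * (a + m * d))])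
        have h2 : 0 ≤ (1 + Real.exp (-κ * (a + (0 : ℕ) * d)))⁻¹ := by positivity
        linarith
    _ = _ := mul_one _

/-- Laplace-kernel anticoncentration for sums of independent variables, in terms of the
number of coordinates whose law charges two points at distance `d`. -/
lemma exists_laplace_bound {X Y : Type*} [Fintype X] (p v : Y → X → ℝ)
    (hp : ∀ y x, 0 ≤ p y x) {y₀ : Y} {x₁ x₂ : X} (hx : v y₀ x₁ < v y₀ x₂)
    (h1 : 0 < p y₀ x₁) (h2 : 0 < p y₀ x₂) {κ : ℝ} (hκ : 0 < κ) :
    ∃ B : ℝ, 0 < B ∧ ∀ (N : ℕ) (y : Fin N → Y) (a : ℝ),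
      ∑ c : Fin N → X, (∏ n, p (y n) (c n)) * Real.exp (-κ * |a + ∑ n, v (y n) (c n)|) ≤
        (∏ n, ∑ x, p (y n) x) * (B * (1 + count y₀ y) ^ (-(1 / 2) : ℝ)) := by
  have hne : x₁ ≠ x₂ := by rintro rfl; exact lt_irrefl _ hx
  set g := ∑ x, p y₀ x with hg
  have hle : p y₀ x₁ + p y₀ x₂ ≤ g := by
    rw [← Finset.sum_pair hne (f := p y₀)]
    exact Finset.sum_le_sum_of_subset_of_nonneg (Finset.subset_univ _) fun x _ _ => hp _ _
  have hg0 : 0 < g := by linarith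
  set q := 2 * min (p y₀ x₁) (p y₀ x₂) / g with hq
  have hmin : 0 < min (p y₀ x₁) (p y₀ x₂) := lt_min h1 h2
  have hq0 : 0 < q := by positivity
  have hq1 : q ≤ 1 := by
    rw [hq, div_le_one hg0]
    linarith [min_le_left (p y₀ x₁) (p y₀ x₂), min_le_right (p y₀ x₁) (p y₀ x₂)]
  have hqg : q / 2 * g = min (p y₀ x₁) (p y₀ x₂) := by
    rw [hq]
    field_simp
  set d := v y₀ x₂ - v y₀ x₁ with hd
  have hd0 : 0 < d := sub_pos.2 hx
  set B₀ := 4 / (1 - Real.exp (-κ * d)) with hB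
  have hD1 : Real.exp (-κ * d) < 1 := Real.exp_lt_one_iff.2 (by nlinarith)
  have hB0 : 0 < B₀ := div_pos (by norm_num) (by linarith)
  refine ⟨B₀ * (q / 2) ^ (-(1 / 2) : ℝ), by positivity, fun N y a => ?_⟩
  have key := anticoncentration p v hp hne (d := d) (q := q) (B := B₀) (by rw [hd]; ring)
    hq0.le hq1 (hqg.trans_le (min_le_left _ _)) (hqg.trans_le (min_le_right _ _))
    (binomialAverage d fun t => Real.exp (-κ * |t|)) (binomialAverage_succ d _) hB0.le
    (binomialAverage_le (fun t => (Real.exp_pos _).le) (sum_exp_neg_abs_le hκ hd0)) N y 0 a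
  simp only [binomialAverage_zero] at key
  refine key.trans (mul_le_mul_of_nonneg_left ?_
    (Finset.prod_nonneg fun n _ => Finset.sum_nonneg fun x _ => hp _ _))
  have hc := count_nonneg y₀ y
  rw [mul_assoc, ← Real.mul_rpow (by positivity) (by positivity)]
  refine mul_le_mul_of_nonneg_left (Real.rpow_le_rpow_of_nonpos (by positivity) ?_ (by norm_num))
    hB0.le
  push_cast
  linarith

lemma sum_pi_prod_eq {ι A : Type*} [Fintype ι] [DecidableEq ι] [Fintype A] (F : ι → A → ℝ) :
    ∑ c : ι → A, ∏ i, F i (c i) = ∏ i, ∑ a, F i a := by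
  rw [Finset.prod_univ_sum, Fintype.piFinset_univ]

lemma sum_prod_mul_exists_le {ι A : Type*} [Fintype ι] [DecidableEq ι] [Fintype A] {P : A → ℝ} (hP : IsDist P)
    (S : A → Prop) :
    ∑ c : ι → A, (∏ i, P (c i)) * (if ∃ j, S (c j) then (1 : ℝ) else 0) ≤
      min 1 ((Fintype.card ι : ℝ) * ∑ a, if S a then P a else 0) := by
  have hprod : ∀ c : ι → A, 0 ≤ ∏ i, P (c i) := fun c => Finset.prod_nonneg fun i _ => hP.1 _
  refine le_min ?_ ?_
  · calc _ ≤ ∑ c : ι → A, ∏ i, P (c i) := by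
          refine Finset.sum_le_sum fun c _ => mul_le_of_le_one_right (hprod c) ?_
          split_ifs <;> norm_num
      _ = 1 := by simp [sum_pi_prod_eq (fun _ : ι => P), hP.2]
  · calc _ ≤ ∑ c : ι → A, ∑ j, (∏ i, P (c i)) * (if S (c j) then (1 : ℝ) else 0) := by
          refine Finset.sum_le_sum fun c _ => ?_
          rw [← Finset.mul_sum]
          refine mul_le_mul_of_nonneg_left ?_ (hprod c)
          have hnn : ∀ j ∈ Finset.univ, (0 : ℝ) ≤ if S (c j) then 1 else 0 := fun j _ => by
            split_ifs <;> norm_num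
          split_ifs with h
          · obtain ⟨j, hj⟩ := h
            refine le_trans ?_ (Finset.single_le_sum hnn (Finset.mem_univ j))
            rw [if_pos hj]
          · exact Finset.sum_nonneg hnn
      _ = ∑ _j : ι, ∑ a, if S a then P a else 0 := by
          rw [Finset.sum_comm]
          refine Finset.sum_congr rfl fun j _ => ?_
          have : ∀ c : ι → A, (∏ i, P (c i)) * (if S (c j) then (1 : ℝ) else 0) =
              ∏ i, (if i = j then (if S (c i) then P (c i) else 0) else P (c i)) := by
            intro c
            rw [← Finset.mul_prod_erase _ _ (Finset.mem_univ j),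
              ← Finset.mul_prod_erase _ (fun i => if i = j then _ else _) (Finset.mem_univ j),
              Finset.prod_congr rfl (g := fun i => P (c i)) fun i hi =>
                if_neg (Finset.ne_of_mem_erase hi)]
            simp only [if_true]
            split_ifs <;> ring
          simp only [this]
          rw [sum_pi_prod_eq (fun i a => if i = j then (if S a then P a else 0) else P a),
            ← Finset.mul_prod_erase _ _ (Finset.mem_univ j),
            Finset.prod_eq_one fun i hi => ?_]
          · simp
          · simp only [if_neg (Finset.ne_of_mem_erase hi), hP.2]
      _ = _ := by simp

/-- The probability that some other codeword of `c` is at least as likely as the transmitted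
codeword `c m`. -/
noncomputable def codebookError {ι A B : Type*} [Fintype B] (V : A → B → ℝ) (m : ι)
    (c : ι → A) : ℝ :=
  ∑ b, V (c m) b * (if ∃ m', m' ≠ m ∧ V (c m) b ≤ V (c m') b then (1 : ℝ) else 0)

/-- The random coding union bound for one message of the i.i.d. ensemble. -/
lemma sum_codebook_error_le {ι A B : Type*} [Fintype ι] [DecidableEq ι] [Fintype A] [Fintype B]
    {V : A → B → ℝ} (hV : ∀ a b, 0 ≤ V a b) {P : A → ℝ} (hP : IsDist P) (m : ι) :
    ∑ c : ι → A, (∏ i, P (c i)) * codebookError V m c ≤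
      ∑ a, ∑ b, P a * V a b *
        min 1 ((Fintype.card ι : ℝ) * ∑ a', if V a b ≤ V a' b then P a' else 0) := by
  set Ψ : A × ({j // j ≠ m} → A) → ℝ := fun q => P q.1 * (∏ j, P (q.2 j)) *
    ∑ b, V q.1 b * (if ∃ j, V q.1 b ≤ V (q.2 j) b then (1 : ℝ) else 0) with hΨ
  have h1 : ∀ c : ι → A, (∏ i, P (c i)) * codebookError V m c =
      Ψ (Equiv.funSplitAt m A c) := by
    intro c
    simp only [codebookError, hΨ, Equiv.funSplitAt_apply, Subtype.exists, exists_prop]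
    rw [Fintype.prod_eq_mul_prod_subtype_ne (fun i => P (c i)) m]
    congr!
  rw [Finset.sum_congr rfl fun c _ => h1 c, (Equiv.funSplitAt m A).sum_comp Ψ,
    Fintype.sum_prod_type]
  refine Finset.sum_le_sum fun a _ => ?_
  simp only [hΨ]
  rw [Finset.sum_congr rfl fun c _ => Finset.mul_sum _ _ _, Finset.sum_comm]
  refine Finset.sum_le_sum fun b _ => ?_
  have hu := sum_prod_mul_exists_le (ι := {j // j ≠ m}) hP (fun a' => V a b ≤ V a' b)
  have hcard : (Fintype.card {j // j ≠ m} : ℝ) ≤ Fintype.card ι := by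
    exact_mod_cast Fintype.card_subtype_le _
  calc _ = P a * V a b * ∑ c : {j // j ≠ m} → A, (∏ j, P (c j)) *
        (if ∃ j, V a b ≤ V (c j) b then (1 : ℝ) else 0) := by
        rw [Finset.mul_sum]
        exact Finset.sum_congr rfl fun c _ => by ring
    _ ≤ _ := by
        refine mul_le_mul_of_nonneg_left (hu.trans (min_le_min_left _ ?_))
          (mul_nonneg (hP.1 a) (hV a b))
        refine mul_le_mul_of_nonneg_right hcard (Finset.sum_nonneg fun a' _ => ?_)
        split_ifs
        exacts [hP.1 _, le_rfl]

/-- Expurgation: a bound on the random coding union expression for `2 M` codewords gives a code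
with `M` codewords and twice that maximal error probability. -/
lemma exists_code_of_rcu {A B : Type*} [Fintype A] [Fintype B]
    {V : A → B → ℝ} (hV : ∀ a b, 0 ≤ V a b) {P : A → ℝ} (hP : IsDist P) {M : ℕ} (hM : 0 < M)
    {ε : ℝ} (hε : 0 < ε)
    (h : ∑ a, ∑ b, P a * V a b *
      min 1 (((2 * M : ℕ) : ℝ) * ∑ a', if V a b ≤ V a' b then P a' else 0) ≤ ε) :
    ∃ (f : Fin M → A) (φ : B → Fin M),
      ∀ m, ∑ b, V (f m) b * (if φ b ≠ m then (1 : ℝ) else 0) ≤ 2 * ε := by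
  set K := 2 * M with hK
  set e : Fin K → (Fin K → A) → ℝ := codebookError V with he
  have he0 : ∀ m c, 0 ≤ e m c := fun m c => Finset.sum_nonneg fun b _ =>
    mul_nonneg (hV _ _) (by split_ifs <;> norm_num)
  have hsum1 : ∑ c : Fin K → A, ∏ i, P (c i) = 1 := by
    simp [sum_pi_prod_eq (fun _ : Fin K => P), hP.2]
  obtain ⟨c, hc⟩ : ∃ c, ∑ m, e m c ≤ K * ε := by
    by_contra! hcon
    have hmean : ∑ c : Fin K → A, (∏ i, P (c i)) * ∑ m, e m c ≤ K * ε := by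
      rw [Finset.sum_congr rfl fun c _ => Finset.mul_sum _ _ _, Finset.sum_comm]
      calc _ ≤ ∑ _m : Fin K, ε := by
            refine Finset.sum_le_sum fun m _ => (sum_codebook_error_le hV hP m).trans ?_
            simpa using h
        _ = _ := by simp
    have hpos : ∃ c : Fin K → A, 0 < ∏ i, P (c i) := by
      by_contra! hno
      have := Finset.sum_nonpos (s := Finset.univ) fun c _ => hno c
      linarith
    have hlt : ∑ c : Fin K → A, (∏ i, P (c i)) * (K * ε) <
        ∑ c : Fin K → A, (∏ i, P (c i)) * ∑ m, e m c := by
      obtain ⟨c₀, hc₀⟩ := hpos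
      refine Finset.sum_lt_sum (fun c _ => mul_le_mul_of_nonneg_left (hcon c).le
        (Finset.prod_nonneg fun i _ => hP.1 _)) ⟨c₀, Finset.mem_univ _, ?_⟩
      exact mul_lt_mul_of_pos_left (hcon c₀) hc₀
    rw [← Finset.sum_mul, hsum1, one_mul] at hlt
    linarith
  set good := Finset.univ.filter fun m => e m c ≤ 2 * ε with hgood
  have hcount : M ≤ good.card := by
    set bad := Finset.univ.filter fun m => ¬ e m c ≤ 2 * ε with hbad
    have htot : good.card + bad.card = K := by
      rw [hgood, hbad, Finset.card_filter_add_card_filter_not]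
      simp
    have hb : (bad.card : ℝ) * (2 * ε) ≤ K * ε := by
      calc (bad.card : ℝ) * (2 * ε) = ∑ _m ∈ bad, 2 * ε := by simp
        _ ≤ ∑ m ∈ bad, e m c := Finset.sum_le_sum fun m hm =>
            (not_le.1 (Finset.mem_filter.1 hm).2).le
        _ ≤ ∑ m, e m c := Finset.sum_le_univ_sum_of_nonneg fun m => he0 m c
        _ ≤ _ := hc
    have hb' : (bad.card : ℝ) ≤ M := by
      have hKc : (K : ℝ) = 2 * M := by exact_mod_cast hK
      rw [hKc] at hb
      nlinarith
    have : bad.card ≤ M := by exact_mod_cast hb'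
    omega
  obtain ⟨T, hTsub, hTcard⟩ := Finset.exists_subset_card_eq hcount
  set g : Fin M ↪o Fin K := T.orderEmbOfFin hTcard with hg
  have : Nonempty (Fin M) := ⟨⟨0, hM⟩⟩
  set D : B → Fin M → Prop := fun b m => ∀ m', m' ≠ m → V (c (g m')) b < V (c (g m)) b with hD
  refine ⟨fun m => c (g m), fun b => Classical.epsilon (D b), fun m => ?_⟩
  have hm : e (g m) c ≤ 2 * ε := (Finset.mem_filter.1 (hTsub (T.orderEmbOfFin_mem hTcard m))).2
  refine le_trans (Finset.sum_le_sum fun b _ => mul_le_mul_of_nonneg_left ?_ (hV _ _)) hm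
  by_cases hne : Classical.epsilon (D b) = m
  · rw [if_neg (not_not.2 hne)]
    split_ifs <;> norm_num
  · rw [if_pos hne, if_pos]
    by_contra! hcon
    have hDm : D b m := fun m' hm' => hcon _ (g.injective.ne hm')
    have hDe : D b (Classical.epsilon (D b)) := Classical.epsilon_spec ⟨m, hDm⟩
    exact lt_asymm (hDe m (Ne.symm hne)) (hDm _ hne)

lemma hasDerivAt_rpow_one_div {w ρ : ℝ} (hw : 0 ≤ w) (hρ : -1 < ρ) :
    HasDerivAt (fun ρ => w ^ (1 / (1 + ρ)))
      (-(w ^ (1 / (1 + ρ)) * Real.log w) / (1 + ρ) ^ 2) ρ := by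
  have h1 : 1 + ρ ≠ 0 := by linarith
  rcases hw.eq_or_lt with rfl | hw
  · have : (fun ρ : ℝ => (0 : ℝ) ^ (1 / (1 + ρ))) =ᶠ[nhds ρ] fun _ => 0 := by
      filter_upwards [lt_mem_nhds hρ] with t ht
      have : 0 < 1 + t := by linarith
      exact Real.zero_rpow (by positivity)
    simpa using (hasDerivAt_const ρ (0 : ℝ)).congr_of_eventuallyEq this
  · have hd : HasDerivAt (fun ρ : ℝ => 1 / (1 + ρ)) (-1 / (1 + ρ) ^ 2) ρ := by
      simpa using ((hasDerivAt_id ρ).const_add 1).fun_inv h1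
    convert hd.const_rpow hw using 1
    ring

/-- The base of the power in the Gallager function. -/
noncomputable def gallagerBase {X Y : Type*} [Fintype X] (W : X → Y → ℝ) (Q : X → ℝ) (ρ : ℝ)
    (y : Y) : ℝ :=
  ∑ x, Q x * W x y ^ (1 / (1 + ρ))

lemma gallagerBase_nonneg {X Y : Type*} [Fintype X] [Fintype Y] {W : X → Y → ℝ}
    (hW : IsChannel W) {Q : X → ℝ} (hQ : IsDist Q) (ρ : ℝ) (y : Y) : 0 ≤ gallagerBase W Q ρ y :=
  Finset.sum_nonneg fun x _ => mul_nonneg (hQ.1 x) (Real.rpow_nonneg (hW.1 x y) _)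

lemma gallagerBase_eq_zero_iff {X Y : Type*} [Fintype X] [Fintype Y] {W : X → Y → ℝ}
    (hW : IsChannel W) {Q : X → ℝ} (hQ : IsDist Q) {ρ : ℝ} (hρ : -1 < ρ) (y : Y) :
    gallagerBase W Q ρ y = 0 ↔ ∀ x, Q x * W x y = 0 := by
  have h1 : 0 < 1 + ρ := by linarith
  rw [gallagerBase, Finset.sum_eq_zero_iff_of_nonneg fun x _ =>
    mul_nonneg (hQ.1 x) (Real.rpow_nonneg (hW.1 x y) _)]
  simp only [Finset.mem_univ, true_imp_iff, mul_eq_zero]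
  refine forall_congr' fun x => or_congr_right ?_
  rw [Real.rpow_eq_zero (hW.1 x y) (by positivity)]

lemma exists_gallagerBase_pos {X Y : Type*} [Fintype X] [Fintype Y] {W : X → Y → ℝ}
    (hW : IsChannel W) {Q : X → ℝ} (hQ : IsDist Q) {ρ : ℝ} (hρ : -1 < ρ) :
    ∃ y, 0 < gallagerBase W Q ρ y := by
  by_contra! hcon
  have h0 : ∀ y x, Q x * W x y = 0 := fun y =>
    (gallagerBase_eq_zero_iff hW hQ hρ y).1 (le_antisymm (hcon y) (gallagerBase_nonneg hW hQ ρ y))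
  have : ∑ x, Q x * ∑ y, W x y = 0 := by simp [Finset.mul_sum, h0]
  simp [hW.2, hQ.2] at this

lemma gallagerSum_pos {X Y : Type*} [Fintype X] [Fintype Y] {W : X → Y → ℝ}
    (hW : IsChannel W) {Q : X → ℝ} (hQ : IsDist Q) {ρ : ℝ} (hρ : -1 < ρ) :
    0 < ∑ y, gallagerBase W Q ρ y ^ (1 + ρ) := by
  obtain ⟨y, hy⟩ := exists_gallagerBase_pos hW hQ hρ
  exact Finset.sum_pos' (fun y _ => Real.rpow_nonneg (gallagerBase_nonneg hW hQ ρ y) _)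
    ⟨y, Finset.mem_univ y, Real.rpow_pos_of_pos hy _⟩

lemma hasDerivAt_gallagerBase {X Y : Type*} [Fintype X] [Fintype Y] {W : X → Y → ℝ}
    (hW : IsChannel W) (Q : X → ℝ) {ρ : ℝ} (hρ : -1 < ρ) (y : Y) :
    HasDerivAt (fun ρ => gallagerBase W Q ρ y)
      (∑ x, Q x * (-(W x y ^ (1 / (1 + ρ)) * Real.log (W x y)) / (1 + ρ) ^ 2)) ρ :=
  HasDerivAt.fun_sum fun x _ => (hasDerivAt_rpow_one_div (hW.1 x y) hρ).const_mul (Q x)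

lemma hasDerivAt_Eo {X Y : Type*} [Fintype X] [Fintype Y] {W : X → Y → ℝ}
    (hW : IsChannel W) {Q : X → ℝ} (hQ : IsDist Q) {ρ : ℝ} (hρ : -1 < ρ) :
    HasDerivAt (fun ρ => Eo W ρ Q)
      (-((∑ y, ((∑ x, Q x * (-(W x y ^ (1 / (1 + ρ)) * Real.log (W x y)) / (1 + ρ) ^ 2)) *
          (1 + ρ) * gallagerBase W Q ρ y ^ ρ +
        gallagerBase W Q ρ y ^ (1 + ρ) * Real.log (gallagerBase W Q ρ y))) /
        ∑ y, gallagerBase W Q ρ y ^ (1 + ρ))) ρ := by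
  have h1 : 0 < 1 + ρ := by linarith
  suffices h : ∀ y ∈ Finset.univ, HasDerivAt (fun ρ => gallagerBase W Q ρ y ^ (1 + ρ))
      ((∑ x, Q x * (-(W x y ^ (1 / (1 + ρ)) * Real.log (W x y)) / (1 + ρ) ^ 2)) *
          (1 + ρ) * gallagerBase W Q ρ y ^ ρ +
        gallagerBase W Q ρ y ^ (1 + ρ) * Real.log (gallagerBase W Q ρ y)) ρ from
    ((HasDerivAt.fun_sum h).log (gallagerSum_pos hW hQ hρ).ne').fun_neg
  intro y _
  rcases (gallagerBase_nonneg hW hQ ρ y).eq_or_lt with h0 | h0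
  · have hz := (gallagerBase_eq_zero_iff hW hQ hρ y).1 h0.symm
    have hev : (fun ρ => gallagerBase W Q ρ y ^ (1 + ρ)) =ᶠ[nhds ρ] fun _ => 0 := by
      filter_upwards [lt_mem_nhds hρ] with t ht
      rw [(gallagerBase_eq_zero_iff hW hQ ht y).2 hz, Real.zero_rpow (by linarith)]
    have hterm : ∀ x, Q x * (-(W x y ^ (1 / (1 + ρ)) * Real.log (W x y)) / (1 + ρ) ^ 2) = 0 := by
      intro x
      rcases mul_eq_zero.1 (hz x) with h | h
      · simp [h]
      · simp [h]
    rw [Finset.sum_eq_zero fun x _ => hterm x, ← h0, Real.zero_rpow h1.ne']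
    simpa using (hasDerivAt_const ρ (0 : ℝ)).congr_of_eventuallyEq hev
  · have := (hasDerivAt_gallagerBase hW Q hρ y).rpow ((hasDerivAt_id ρ).const_add 1) h0
    simpa using this

lemma hasDerivAt_Eo_zero {X Y : Type*} [Fintype X] [Fintype Y] {W : X → Y → ℝ}
    (hW : IsChannel W) {Q : X → ℝ} (hQ : IsDist Q) :
    HasDerivAt (fun ρ => Eo W ρ Q) (MI W Q) 0 := by
  convert hasDerivAt_Eo hW hQ (ρ := 0) (by norm_num) using 1
  have hb : ∀ y, gallagerBase W Q 0 y = ∑ x, Q x * W x y := by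
    intro y
    simp [gallagerBase]
  have hS : ∑ y, gallagerBase W Q 0 y ^ (1 + (0 : ℝ)) = 1 := by
    simp only [add_zero, Real.rpow_one, hb]
    rw [Finset.sum_comm]
    simp [← Finset.mul_sum, hW.2, hQ.2]
  rw [hS, div_one, MI, Finset.sum_comm, ← Finset.sum_neg_distrib]
  refine Finset.sum_congr rfl fun y _ => ?_
  simp only [hb, add_zero, div_one, Real.rpow_one, Real.rpow_zero, mul_one, one_pow]
  rw [Finset.sum_mul, ← Finset.sum_add_distrib, ← Finset.sum_neg_distrib]
  refine Finset.sum_congr rfl fun x _ => ?_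
  by_cases hz : Q x * W x y = 0
  · rcases mul_eq_zero.1 hz with h | h <;> simp [h]
  · have hw : W x y ≠ 0 := right_ne_zero_of_mul hz
    have hq : ∑ x, Q x * W x y ≠ 0 := by
      intro h0
      exact hz ((Finset.sum_eq_zero_iff_of_nonneg fun x _ =>
        mul_nonneg (hQ.1 x) (hW.1 x y)).1 h0 x (Finset.mem_univ x))
    rw [Real.log_div hw hq]
    ring

/-- Between the critical rate and the mutual information, the random coding exponent is attained
at an interior `ρ`, which is at least `ρ^*_R(Q)`. -/
lemma exists_interior_maximizer {X Y : Type*} [Fintype X] [Fintype Y] {W : X → Y → ℝ}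
    (hW : IsChannel W) {Q : X → ℝ} (hQ : IsDist Q) {R : ℝ} (hR1 : RcrQ W Q < R)
    (hR2 : R < MI W Q) :
    ∃ ρ, 0 < ρ ∧ ρ < 1 ∧ ErQ W R Q = -ρ * R + Eo W ρ Q ∧ rhoStarQ W Q R ≤ ρ := by
  have hderiv : ∀ {a ρ D : ℝ}, HasDerivAt (fun ρ => Eo W ρ Q) D ρ →
      HasDerivAt (fun ρ => -ρ * a + Eo W ρ Q) (-a + D) ρ := by
    intro a ρ D h
    simpa using ((hasDerivAt_id ρ).fun_neg.mul_const a).fun_add h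
  have hcont : ∀ a, ContinuousOn (fun ρ => -ρ * a + Eo W ρ Q) (Set.Icc 0 1) := fun a ρ hρ =>
    (hderiv (hasDerivAt_Eo hW hQ (by linarith [hρ.1]))).continuousAt.continuousWithinAt
  have hbdd : ∀ a, BddAbove ((fun ρ => -ρ * a + Eo W ρ Q) '' Set.Icc (0 : ℝ) 1) := fun a =>
    (isCompact_Icc.image_of_continuousOn (hcont a)).bddAbove
  obtain ⟨ρ, hρ, hmax⟩ := isCompact_Icc.exists_isMaxOn (Set.nonempty_Icc.2 zero_le_one) (hcont R)
  have hEr : ErQ W R Q = -ρ * R + Eo W ρ Q := by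
    refine IsGreatest.csSup_eq ⟨⟨ρ, hρ, rfl⟩, ?_⟩
    rintro _ ⟨t, ht, rfl⟩
    exact hmax ht
  have hρ0 : ρ ≠ 0 := by
    rintro rfl
    have hd := hderiv (a := R) (hasDerivAt_Eo_zero hW hQ)
    have h := hasDerivWithinAt_iff_tendsto_slope.1 (hd.hasDerivWithinAt (s := Set.Ioi 0))
    rw [Set.sdiff_singleton_eq_self (by simp)] at h
    have hpos : 0 < -R + MI W Q := by linarith
    obtain ⟨t, ht, ht0, ht1⟩ := ((h.eventually (lt_mem_nhds hpos)).and
      (Ioo_mem_nhdsGT (zero_lt_one' ℝ))).exists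
    have := hmax (Set.mem_Icc.2 ⟨ht0.le, ht1.le⟩)
    rw [slope_def_field, sub_zero] at ht
    have := (div_pos_iff_of_pos_right ht0).1 ht
    simp only [Set.mem_ofPred_eq] at *
    linarith
  have hρ1 : ρ ≠ 1 := by
    rintro rfl
    have hd := hderiv (a := R) (hasDerivAt_Eo hW hQ (ρ := 1)
      (by norm_num)).differentiableAt.hasDerivAt
    have h := hasDerivWithinAt_iff_tendsto_slope.1 (hd.hasDerivWithinAt (s := Set.Iio 1))
    rw [Set.sdiff_singleton_eq_self (by simp)] at h
    have hneg : -R + deriv (fun ρ => Eo W ρ Q) 1 < 0 := by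
      have := hR1
      rw [RcrQ] at this
      linarith
    obtain ⟨t, ht, ht0, ht1⟩ := ((h.eventually (gt_mem_nhds hneg)).and
      (Ioo_mem_nhdsLT (zero_lt_one' ℝ))).exists
    have := hmax (Set.mem_Icc.2 ⟨ht0.le, ht1.le⟩)
    rw [slope_def_field, div_neg_iff] at ht
    simp only [Set.mem_ofPred_eq] at *
    rcases ht with ht | ht <;> linarith
  have hlt0 : 0 < ρ := lt_of_le_of_ne hρ.1 (Ne.symm hρ0)
  refine ⟨ρ, hlt0, lt_of_le_of_ne hρ.2 hρ1, hEr, ?_⟩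
  rw [rhoStarQ]
  by_cases hdiff : DifferentiableAt ℝ (fun a => ErQ W a Q) R
  · have hmin : IsLocalMin (fun a => ErQ W a Q + ρ * a) R := by
      refine Filter.Eventually.of_forall fun a => ?_
      have : -ρ * a + Eo W ρ Q ≤ ErQ W a Q := le_csSup (hbdd a) ⟨ρ, hρ, rfl⟩
      simp only [hEr]
      linarith
    have hd : HasDerivAt (fun a => ErQ W a Q + ρ * a) (deriv (fun a => ErQ W a Q) R + ρ) R := by
      simpa using hdiff.hasDerivAt.fun_add ((hasDerivAt_id R).const_mul ρ)
    have := hmin.hasDerivAt_eq_zero hd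
    linarith
  · rw [deriv_zero_of_not_differentiableAt hdiff]
    simpa using hlt0.le

/-- The tilted weights `Q(x) W(y|x)^{1/(1+ρ)}`. -/
noncomputable def tiltedWeight {X Y : Type*} (W : X → Y → ℝ) (Q : X → ℝ) (ρ : ℝ) (y : Y) (x : X) :
    ℝ :=
  Q x * W x y ^ (1 / (1 + ρ))

lemma prod_tiltedWeight {X Y : Type*} {W : X → Y → ℝ} (hW : ∀ x y, 0 ≤ W x y) (Q : X → ℝ) (ρ : ℝ)
    {N : ℕ} (y : Fin N → Y) (x : Fin N → X) :
    ∏ n, tiltedWeight W Q ρ (y n) (x n) = (∏ n, Q (x n)) * Wn W x y ^ (1 / (1 + ρ)) := by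
  simp only [tiltedWeight, Finset.prod_mul_distrib, Wn]
  rw [Real.finsetProd_rpow _ _ fun n _ => hW _ _]

lemma log_Wn {X Y : Type*} {W : X → Y → ℝ} {N : ℕ} {x : Fin N → X} {y : Fin N → Y}
    (h : Wn W x y ≠ 0) : Real.log (Wn W x y) = ∑ n, Real.log (W (x n) (y n)) :=
  Real.log_prod fun n hn => Finset.prod_ne_zero_iff.1 h n hn

lemma Wn_nonneg {X Y : Type*} {W : X → Y → ℝ} (hW : ∀ x y, 0 ≤ W x y) {N : ℕ} (x : Fin N → X)
    (y : Fin N → Y) : 0 ≤ Wn W x y :=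
  Finset.prod_nonneg fun _ _ => hW _ _

lemma min_one_exp_le {ρ κ t : ℝ} (h1 : κ ≤ ρ) (h2 : κ ≤ 1 - ρ) :
    min 1 (Real.exp t) ≤ Real.exp (ρ * t - κ * |t|) := by
  rcases le_total 0 t with ht | ht
  · refine (min_le_left _ _).trans (Real.one_le_exp ?_)
    rw [abs_of_nonneg ht]
    nlinarith
  · refine (min_le_right _ _).trans (Real.exp_le_exp.2 ?_)
    rw [abs_of_nonpos ht]
    nlinarith

/-- The probability that an independent codeword is at least as likely as `x` given `y`. -/
lemma pairwise_error_le {X Y : Type*} [Fintype X] {W : X → Y → ℝ} (hW : ∀ x y, 0 ≤ W x y)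
    {Q : X → ℝ} (hQ : ∀ x, 0 ≤ Q x) {ρ : ℝ} {N : ℕ} {x : Fin N → X} {y : Fin N → Y}
    (hx : 0 < Wn W x y) {D : ℝ}
    (hD : ∀ a : ℝ, ∑ z : Fin N → X, (∏ n, tiltedWeight W Q ρ (y n) (z n)) *
      Real.exp (-(1 / (1 + ρ)) * |a + ∑ n, Real.log (W (z n) (y n))|) ≤ D) :
    ∑ z : Fin N → X, (if Wn W x y ≤ Wn W z y then ∏ n, Q (z n) else 0) ≤
      D * Real.exp (-(1 / (1 + ρ)) * Real.log (Wn W x y)) := by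
  set s := 1 / (1 + ρ) with hs
  have hp : ∀ z : Fin N → X, 0 ≤ ∏ n, tiltedWeight W Q ρ (y n) (z n) := fun z =>
    Finset.prod_nonneg fun n _ => mul_nonneg (hQ _) (Real.rpow_nonneg (hW _ _) _)
  refine le_trans ?_ (mul_le_mul_of_nonneg_right (hD (-Real.log (Wn W x y))) (Real.exp_pos _).le)
  rw [Finset.sum_mul]
  refine Finset.sum_le_sum fun z _ => ?_
  split_ifs with h
  · have hz : 0 < Wn W z y := hx.trans_le h
    have hlog := Real.log_le_log hx h
    rw [← log_Wn hz.ne', prod_tiltedWeight hW, Real.rpow_def_of_pos hz, ← hs,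
      abs_of_nonneg (by linarith), mul_assoc, mul_assoc, ← Real.exp_add, ← Real.exp_add]
    refine le_of_eq ?_
    rw [show Real.log (Wn W z y) * s + (-s * (-Real.log (Wn W x y) + Real.log (Wn W z y)) +
      -s * Real.log (Wn W x y)) = 0 by ring, Real.exp_zero, mul_one]
  · exact mul_nonneg (mul_nonneg (hp z) (Real.exp_pos _).le) (Real.exp_pos _).le

/-- The random coding union expression conditioned on the channel output `y`. -/
lemma conditional_rcu_le {X Y : Type*} [Fintype X] {W : X → Y → ℝ} (hW : ∀ x y, 0 ≤ W x y)
    {Q : X → ℝ} (hQ : ∀ x, 0 ≤ Q x) {ρ κ : ℝ} (hρ : 0 < ρ) (hκ1 : κ ≤ ρ) (hκ2 : κ ≤ 1 - ρ)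
    {N : ℕ} (y : Fin N → Y) {D E M : ℝ} (hM : 0 < M)
    (hDpos : (∃ x : Fin N → X, 0 < ∏ n, tiltedWeight W Q ρ (y n) (x n)) → 0 < D) (hD0 : 0 ≤ D)
    (hD : ∀ a : ℝ, ∑ z : Fin N → X, (∏ n, tiltedWeight W Q ρ (y n) (z n)) *
      Real.exp (-(1 / (1 + ρ)) * |a + ∑ n, Real.log (W (z n) (y n))|) ≤ D)
    (hE : ∀ a : ℝ, ∑ z : Fin N → X, (∏ n, tiltedWeight W Q ρ (y n) (z n)) *
      Real.exp (-(κ * (1 / (1 + ρ))) * |a + ∑ n, Real.log (W (z n) (y n))|) ≤ E) :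
    ∑ x : Fin N → X, (∏ n, Q (x n)) * Wn W x y *
      min 1 (M * ∑ z : Fin N → X, if Wn W x y ≤ Wn W z y then ∏ n, Q (z n) else 0) ≤
      (M * D) ^ ρ * E := by
  set s := 1 / (1 + ρ) with hs
  have hs0 : 0 < s := by positivity
  have hsρ : s + s * ρ = 1 := by
    rw [hs]
    field_simp
  have hp : ∀ z : Fin N → X, 0 ≤ ∏ n, tiltedWeight W Q ρ (y n) (z n) := fun z =>
    Finset.prod_nonneg fun n _ => mul_nonneg (hQ _) (Real.rpow_nonneg (hW _ _) _)
  refine le_trans ?_ (mul_le_mul_of_nonneg_left (hE (-(Real.log (M * D) / s)))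
    (Real.rpow_nonneg (mul_nonneg hM.le hD0) ρ))
  rw [Finset.mul_sum]
  refine Finset.sum_le_sum fun x _ => ?_
  have hQx : 0 ≤ ∏ n, Q (x n) := Finset.prod_nonneg fun n _ => hQ _
  rcases hQx.eq_or_lt with h0 | hQx
  · rw [← h0, zero_mul, zero_mul]
    exact mul_nonneg (Real.rpow_nonneg (mul_nonneg hM.le hD0) ρ)
      (mul_nonneg (hp x) (Real.exp_pos _).le)
  rcases (Wn_nonneg hW x y).eq_or_lt with h0 | hWx
  · rw [← h0, mul_zero, zero_mul]
    exact mul_nonneg (Real.rpow_nonneg (mul_nonneg hM.le hD0) ρ)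
      (mul_nonneg (hp x) (Real.exp_pos _).le)
  have hDp : 0 < D := hDpos ⟨x, by rw [prod_tiltedWeight hW]; positivity⟩
  have hMD : 0 < M * D := mul_pos hM hDp
  set L := Real.log (Wn W x y) with hL
  set A := Real.log (M * D) with hA
  have hpair : M * ∑ z : Fin N → X, (if Wn W x y ≤ Wn W z y then ∏ n, Q (z n) else 0) ≤
      Real.exp (A - s * L) := by
    refine (mul_le_mul_of_nonneg_left (pairwise_error_le hW hQ hWx hD) hM.le).trans
      (le_of_eq ?_)
    rw [← mul_assoc, sub_eq_add_neg, Real.exp_add, hA, Real.exp_log hMD, neg_mul]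
  have habs : κ * s * |-(A / s) + L| = κ * |A - s * L| := by
    rw [mul_assoc, ← abs_of_pos hs0, ← abs_mul, abs_of_pos hs0, ← abs_neg]
    congr 2
    field_simp
    ring
  rw [← log_Wn hWx.ne', prod_tiltedWeight hW, ← hs, ← hL, neg_mul, habs,
    Real.rpow_def_of_pos hWx, Real.rpow_def_of_pos hMD, ← hL, ← hA]
  calc (∏ n, Q (x n)) * Wn W x y * _
      ≤ (∏ n, Q (x n)) * Wn W x y * Real.exp (ρ * (A - s * L) - κ * |A - s * L|) :=
        mul_le_mul_of_nonneg_left ((min_le_min_left _ hpair).trans (min_one_exp_le hκ1 hκ2))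
          (mul_nonneg hQx.le hWx.le)
    _ = (∏ n, Q (x n)) * (Real.exp L * Real.exp (ρ * (A - s * L) - κ * |A - s * L|)) := by
        rw [hL, Real.exp_log hWx, mul_assoc]
    _ = (∏ n, Q (x n)) * (Real.exp (A * ρ) * (Real.exp (L * s) * Real.exp (-(κ * |A - s * L|)))) := by
        rw [← Real.exp_add, ← Real.exp_add, ← Real.exp_add]
        congr 2
        linear_combination -L * hsρ
    _ = _ := by ring

set_option maxHeartbeats 1000000 in
/-- Refined random coding union bound for nonsingular pairs, for every `ρ ∈ (0,1)`. -/
lemma exists_rcu_bound {X Y : Type*} [Fintype X] [Fintype Y] {W : X → Y → ℝ}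
    (hW : IsChannel W) {Q : X → ℝ} (hQ : IsDist Q) (hns : ¬ Singular W Q) {ρ : ℝ}
    (hρ0 : 0 < ρ) (hρ1 : ρ < 1) :
    ∃ K : ℝ, 0 < K ∧ ∀ (N : ℕ) (M : ℝ), 0 < N → 0 < M →
      ∑ x : Fin N → X, ∑ y : Fin N → Y, (∏ n, Q (x n)) * Wn W x y *
        min 1 (M * ∑ z : Fin N → X, if Wn W x y ≤ Wn W z y then ∏ n, Q (z n) else 0) ≤
      K * M ^ ρ * (N : ℝ) ^ (-((1 + ρ) / 2)) * Real.exp (-(N : ℝ) * Eo W ρ Q) := by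
  obtain ⟨y₀, x₁, x₂, hx₁, hx₂, hlt⟩ : ∃ y₀ x₁ x₂, 0 < Q x₁ * W x₁ y₀ ∧ 0 < Q x₂ * W x₂ y₀ ∧
      W x₁ y₀ < W x₂ y₀ := by
    simp only [Singular, not_forall] at hns
    obtain ⟨x, y, z, hpos, hne⟩ := hns
    have h1 : 0 ≤ Q x * W x y := mul_nonneg (hQ.1 x) (hW.1 x y)
    have h2 : 0 ≤ Q z * W z y := mul_nonneg (hQ.1 z) (hW.1 z y)
    have h1' : 0 < Q x * W x y := lt_of_le_of_ne h1 (left_ne_zero_of_mul hpos.ne').symm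
    have h2' : 0 < Q z * W z y := lt_of_le_of_ne h2 (right_ne_zero_of_mul hpos.ne').symm
    rcases lt_or_gt_of_ne hne with h | h
    · exact ⟨y, x, z, h1', h2', h⟩
    · exact ⟨y, z, x, h2', h1', h⟩
  have hρ : -1 < ρ := by linarith
  have hs0 : 0 < 1 / (1 + ρ) := by positivity
  have hQW : ∀ {x}, 0 < Q x * W x y₀ → 0 < Q x ∧ 0 < W x y₀ := fun {x} h =>
    ⟨lt_of_le_of_ne (hQ.1 x) (left_ne_zero_of_mul h.ne').symm,
      lt_of_le_of_ne (hW.1 x y₀) (right_ne_zero_of_mul h.ne').symm⟩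
  have hp : ∀ y x, 0 ≤ tiltedWeight W Q ρ y x := fun y x =>
    mul_nonneg (hQ.1 x) (Real.rpow_nonneg (hW.1 x y) _)
  have hppos : ∀ {x}, 0 < Q x * W x y₀ → 0 < tiltedWeight W Q ρ y₀ x := fun h =>
    mul_pos (hQW h).1 (Real.rpow_pos_of_pos (hQW h).2 _)
  have hlog := Real.log_lt_log (hQW hx₁).2 hlt
  set κ := min ρ (1 - ρ) with hκ
  have hκ0 : 0 < κ := lt_min hρ0 (by linarith)
  obtain ⟨B₁, hB₁, hb₁⟩ := exists_laplace_bound (tiltedWeight W Q ρ) (fun y x => Real.log (W x y))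
    hp hlog (hppos hx₁) (hppos hx₂) hs0
  obtain ⟨B₂, hB₂, hb₂⟩ := exists_laplace_bound (tiltedWeight W Q ρ) (fun y x => Real.log (W x y))
    hp hlog (hppos hx₁) (hppos hx₂) (mul_pos hκ0 hs0)
  set f : Y → ℝ := fun y => gallagerBase W Q ρ y ^ (1 + ρ) with hf
  have hg0 := gallagerBase_nonneg hW hQ ρ
  have hf0 : ∀ y, 0 ≤ f y := fun y => Real.rpow_nonneg (hg0 y) _
  have hF : 0 < ∑ y, f y := gallagerSum_pos hW hQ hρ
  have hgy₀ : 0 < gallagerBase W Q ρ y₀ :=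
    Finset.sum_pos' (fun x _ => hp y₀ x) ⟨x₁, Finset.mem_univ _, hppos hx₁⟩
  have hfy₀ : 0 < f y₀ := Real.rpow_pos_of_pos hgy₀ _
  set q := f y₀ / ∑ y, f y with hq
  have hq0 : 0 < q := div_pos hfy₀ hF
  have hq1 : q ≤ 1 := (div_le_one hF).2
    (Finset.single_le_sum (fun y _ => hf0 y) (Finset.mem_univ y₀))
  have hqf : f y₀ = q * ∑ y, f y := by
    rw [hq]
    field_simp
  refine ⟨B₁ ^ ρ * B₂ * (q / 2) ^ (-((1 + ρ) / 2)), by positivity, fun N M hN hM => ?_⟩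
  have hNpos : (0 : ℝ) < N := by exact_mod_cast hN
  rw [Finset.sum_comm]
  have hcond : ∀ y : Fin N → Y, ∑ x : Fin N → X, (∏ n, Q (x n)) * Wn W x y *
      min 1 (M * ∑ z : Fin N → X, if Wn W x y ≤ Wn W z y then ∏ n, Q (z n) else 0) ≤
      M ^ ρ * B₁ ^ ρ * B₂ * ((∏ n, f (y n)) * (1 + count y₀ y) ^ (-((1 + ρ) / 2))) := by
    intro y
    have hc := count_nonneg y₀ y
    have hc1 : 0 < 1 + count y₀ y := by linarith
    set G := ∏ n, ∑ x, tiltedWeight W Q ρ (y n) x with hG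
    have hG0 : 0 ≤ G := Finset.prod_nonneg fun n _ => Finset.sum_nonneg fun x _ => hp _ _
    have hGpos : (∃ x : Fin N → X, 0 < ∏ n, tiltedWeight W Q ρ (y n) (x n)) → 0 < G := by
      rintro ⟨x, hx⟩
      refine Finset.prod_pos fun n _ => Finset.sum_pos' (fun x _ => hp _ _)
        ⟨x n, Finset.mem_univ _, lt_of_le_of_ne (hp _ _) (Ne.symm ?_)⟩
      exact Finset.prod_ne_zero_iff.1 hx.ne' n (Finset.mem_univ n)
    have key := conditional_rcu_le (κ := κ) hW.1 hQ.1 hρ0 (min_le_left _ _) (min_le_right _ _) y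
      (D := G * (B₁ * (1 + count y₀ y) ^ (-(1 / 2) : ℝ)))
      (E := G * (B₂ * (1 + count y₀ y) ^ (-(1 / 2) : ℝ))) hM
      (fun h => mul_pos (hGpos h) (by positivity)) (mul_nonneg hG0 (by positivity))
      (hb₁ N y) (hb₂ N y)
    refine key.trans (le_of_eq ?_)
    have hGf : ∏ n, f (y n) = G * G ^ ρ := by
      simp only [hf]
      rw [Real.finsetProd_rpow _ _ fun n _ => hg0 _, Real.rpow_one_add' (Finset.prod_nonneg
        fun n _ => hg0 _) (by linarith)]
      rfl
    have hcnt : (1 + count y₀ y) ^ (-((1 + ρ) / 2)) =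
        ((1 + count y₀ y) ^ (-(1 / 2) : ℝ)) ^ ρ * (1 + count y₀ y) ^ (-(1 / 2) : ℝ) := by
      rw [← Real.rpow_mul hc1.le, ← Real.rpow_add hc1]
      congr 1
      ring
    rw [hGf, hcnt, Real.mul_rpow hM.le (by positivity), Real.mul_rpow hG0 (by positivity),
      Real.mul_rpow hB₁.le (by positivity)]
    ring
  have hsum := sum_prod_mul_count_rpow_le f hf0 (y₀ := y₀) (θ := (1 + ρ) / 2) (by linarith)
    (by linarith) hq0.le hq1 hqf N 1 le_rfl
  have hexp : (∑ y, f y) ^ N = Real.exp (-(N : ℝ) * Eo W ρ Q) := by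
    rw [Eo, neg_mul_neg, mul_comm, ← Real.rpow_natCast, Real.rpow_def_of_pos hF]
    rfl
  have hpow : (1 + q / 2 * (N : ℝ)) ^ (-((1 + ρ) / 2)) ≤
      (q / 2) ^ (-((1 + ρ) / 2)) * (N : ℝ) ^ (-((1 + ρ) / 2)) := by
    rw [← Real.mul_rpow (by positivity) hNpos.le]
    exact Real.rpow_le_rpow_of_nonpos (by positivity) (by linarith) (by linarith)
  calc _ ≤ ∑ y : Fin N → Y, M ^ ρ * B₁ ^ ρ * B₂ *
        ((∏ n, f (y n)) * (1 + count y₀ y) ^ (-((1 + ρ) / 2))) :=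
        Finset.sum_le_sum fun y _ => hcond y
    _ ≤ M ^ ρ * B₁ ^ ρ * B₂ * ((∑ y, f y) ^ N *
        ((q / 2) ^ (-((1 + ρ) / 2)) * (N : ℝ) ^ (-((1 + ρ) / 2)))) := by
        rw [← Finset.mul_sum]
        refine mul_le_mul_of_nonneg_left (hsum.trans ?_) (by positivity)
        exact mul_le_mul_of_nonneg_left hpow (by positivity)
    _ = _ := by
        rw [hexp]
        ring

/-- Refined random coding bound, nonsingular case: existence of an `(N,R)` code
with maximal error probability at most `K̃₂ · N^{-(1+ρ*_R(Q))/2} · exp(-N E_r(R,Q))`. -/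
theorem statement3 {X Y : Type*} [Fintype X] [Fintype Y] [Nonempty X] [Nonempty Y]
    (W : X → Y → ℝ) (hW : IsChannel W) (hcr : Rcr W < Capacity W)
    (Q : X → ℝ) (hQ : IsDist Q) (R : ℝ) (hR : 0 < R)
    (hns : ¬ Singular W Q) (hR1 : RcrQ W Q < R) (hR2 : R < MI W Q) :
    ∃ K : ℝ, 0 < K ∧ ∀ N : ℕ, 0 < N →
      ∃ (f : Fin (nMsgs N R) → Fin N → X) (φ : (Fin N → Y) → Fin (nMsgs N R)),
        Pmax W f φ ≤
          K * (N : ℝ) ^ (-(1 + rhoStarQ W Q R) / 2) * Real.exp (-(N : ℝ) * ErQ W R Q) := by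
  obtain ⟨ρ, hρ0, hρ1, hEr, hstar⟩ := exists_interior_maximizer hW hQ hR1 hR2
  obtain ⟨K, hK, hbound⟩ := exists_rcu_bound hW hQ hns hρ0 hρ1
  refine ⟨2 * (K * 4 ^ ρ), by positivity, fun N hN => ?_⟩
  have hNpos : (0 : ℝ) < N := by exact_mod_cast hN
  have hM : 0 < nMsgs N R := Nat.ceil_pos.2 (Real.exp_pos _)
  have hQn : IsDist (fun x : Fin N → X => ∏ n, Q (x n)) :=
    ⟨fun x => Finset.prod_nonneg fun n _ => hQ.1 _, by
      rw [sum_pi_prod_eq fun _ : Fin N => Q]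
      simp [hQ.2]⟩
  have hcard : ((2 * nMsgs N R : ℕ) : ℝ) ≤ 4 * Real.exp (N * R) := by
    have h1 : (nMsgs N R : ℝ) < Real.exp (N * R) + 1 := Nat.ceil_lt_add_one (Real.exp_pos _).le
    have h2 : 1 ≤ Real.exp (N * R) := Real.one_le_exp (by positivity)
    push_cast
    linarith
  set ε := K * (4 * Real.exp (N * R)) ^ ρ * (N : ℝ) ^ (-((1 + ρ) / 2)) *
    Real.exp (-(N : ℝ) * Eo W ρ Q) with hε
  have hε0 : 0 < ε := by positivity
  obtain ⟨f, φ, hfφ⟩ := exists_code_of_rcu (V := fun (x : Fin N → X) (y : Fin N → Y) => Wn W x y)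
    (fun x y => Wn_nonneg hW.1 x y) hQn hM hε0
    ((hbound N ((2 * nMsgs N R : ℕ) : ℝ) hN (by positivity)).trans (by
      rw [hε]
      gcongr))
  refine ⟨f, φ, ?_⟩
  have : Nonempty (Fin (nMsgs N R)) := ⟨⟨0, hM⟩⟩
  refine (ciSup_le fun m => ?_).trans (b := 2 * ε) ?_
  · convert hfφ m
  · have hpow : (N : ℝ) ^ (-((1 + ρ) / 2)) ≤ (N : ℝ) ^ (-(1 + rhoStarQ W Q R) / 2) :=
      Real.rpow_le_rpow_of_exponent_le (by exact_mod_cast hN) (by linarith)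
    have hexp : Real.exp (N * R) ^ ρ * Real.exp (-(N : ℝ) * Eo W ρ Q) =
        Real.exp (-(N : ℝ) * ErQ W R Q) := by
      rw [← Real.exp_mul, ← Real.exp_add, hEr]
      congr 1
      ring
    calc 2 * ε = 2 * (K * 4 ^ ρ) * (N : ℝ) ^ (-((1 + ρ) / 2)) *
          (Real.exp (N * R) ^ ρ * Real.exp (-(N : ℝ) * Eo W ρ Q)) := by
          rw [hε, Real.mul_rpow (by norm_num) (Real.exp_pos _).le]
          ring
      _ ≤ _ := by
          rw [hexp]
          gcongr

end RCB
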